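/- Let λ > 0 and 1 < p < ∞. Suppose F ⊆ L^p((0,∞), x^{2λ}dx) satisfies: (a) sup_{f∈F} ‖f‖_{L^p(dm_λ)} < ∞; (b) for every ε > 0 there exists M > 0 with ∫_M^∞ |f(x)|^p x^{2λ} dx < ε^p for all f ∈ F; (c) for every ε > 0 there exists ρ > 0 with ∫_0^∞ |f(x+y) - f(x)|^p x^{2λ} dx < ε^p for all f ∈ F and 0 < y < ρ. Then F is totally bounded in L^p((0,∞), x^{2λ}dx). -/

import Mathlib

open MeasureTheory Set

noncomputable def besselMeasure (lam : ℝ) : Measure ℝ :=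
  (volume.restrict (Set.Ioi (0:ℝ))).withDensity fun x => ENNReal.ofReal (x ^ (2*lam))

/-! Near-invariance of `f` under the translations `0 < y < 2 * h` makes `f` close to a step function
on the grid `h ℤ`: on the cell of `x`, use the value of `f` at a point whose offset `t` from the
left end of the cell lies in `(h, 2 * h)`, so that it is reached from `x` by a small translation
to the right, and pick `t` by averaging. Uniform decay at infinity leaves finitely many cells, so
`F` is uniformly close to a finite-dimensional space. Boundedness of `F` is automatic: finitely many
small translations, none of which increases the norm because the density is monotone, carry a
bounded interval into the region where the whole family is small.
-/

open scoped ENNReal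

section NormedSpace

variable {𝕜 E : Type*} [NontriviallyNormedField 𝕜] [LocallyCompactSpace 𝕜]
  [NormedAddCommGroup E] [NormedSpace 𝕜 E]

theorem totallyBounded_of_forall_exists_finiteDimensional {F : Set E}
    (hbdd : Bornology.IsBounded F)
    (happrox : ∀ ε > (0 : ℝ), ∃ V : Submodule 𝕜 E, FiniteDimensional 𝕜 V ∧
      ∀ f ∈ F, ∃ g ∈ V, dist f g ≤ ε) :
    TotallyBounded F := by
  rw [Metric.totallyBounded_iff]
  intro ε hε
  obtain ⟨V, hV, hFV⟩ := happrox (ε / 2) (half_pos hε)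
  obtain ⟨C, hC⟩ := hbdd.exists_norm_le
  have : ProperSpace V := FiniteDimensional.proper 𝕜 V
  have hcompact : IsCompact ((↑) '' Metric.closedBall (0 : V) (C + ε / 2) : Set E) :=
    (isCompact_closedBall _ _).image continuous_subtype_val
  obtain ⟨t, ht, hcover⟩ :=
    Metric.totallyBounded_iff.1 hcompact.totallyBounded (ε / 2) (half_pos hε)
  refine ⟨t, ht, fun f hf => ?_⟩
  obtain ⟨g, hgV, hfg⟩ := hFV f hf
  have hg : ‖g‖ ≤ C + ε / 2 := by
    calc ‖g‖ ≤ ‖f‖ + ‖f - g‖ := norm_le_norm_add_norm_sub f g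
      _ ≤ C + ε / 2 := add_le_add (hC f hf) (dist_eq_norm f g ▸ hfg)
  obtain ⟨z, hz, hgz⟩ := mem_iUnion₂.1 (hcover ⟨⟨g, hgV⟩, by simpa using hg, rfl⟩)
  exact mem_iUnion₂.2 ⟨z, hz, (dist_triangle f g z).trans_lt
    ((add_lt_add_of_le_of_lt hfg hgz).trans_eq (add_halves ε))⟩

end NormedSpace

section LpSeminorm

variable {α β E : Type*} [MeasurableSpace α] [MeasurableSpace β] [NormedAddCommGroup E]
  {μ : Measure α} {p : ℝ≥0∞}

theorem eLpNorm_comp_le_of_map_le {ν : Measure β} {φ : α → β} {f : β → E}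
    (hf : AEStronglyMeasurable f ν) (hφ : AEMeasurable φ μ) (hμν : μ.map φ ≤ ν) :
    eLpNorm (f ∘ φ) p μ ≤ eLpNorm f p ν := by
  rw [← eLpNorm_map_measure (hf.mono_measure hμν) hφ]
  exact eLpNorm_mono_measure f hμν

theorem eLpNorm_le_eLpNorm_restrict_add_compl {f : α → E} (hf : AEStronglyMeasurable f μ)
    (hp : 1 ≤ p) {s : Set α} (hs : MeasurableSet s) :
    eLpNorm f p μ ≤ eLpNorm f p (μ.restrict s) + eLpNorm f p (μ.restrict sᶜ) := by
  rw [← eLpNorm_indicator_eq_eLpNorm_restrict hs,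
    ← eLpNorm_indicator_eq_eLpNorm_restrict hs.compl]
  conv_lhs => rw [← s.indicator_self_add_compl f]
  exact eLpNorm_add_le (hf.indicator hs) (hf.indicator hs.compl) hp

theorem eLpNorm_sub_indicator_le {f g : α → E} (hf : AEStronglyMeasurable f μ)
    (hg : AEStronglyMeasurable g μ) (hp : 1 ≤ p) {s : Set α} (hs : MeasurableSet s) :
    eLpNorm (f - s.indicator g) p μ ≤ eLpNorm (f - g) p μ + eLpNorm f p (μ.restrict sᶜ) := by
  have hsplit : f - s.indicator g = s.indicator (f - g) + sᶜ.indicator f := by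
    rw [indicator_sub', sub_add_eq_add_sub, s.indicator_self_add_compl f]
  rw [hsplit, ← eLpNorm_indicator_eq_eLpNorm_restrict hs.compl]
  exact (eLpNorm_add_le ((hf.sub hg).indicator hs) (hf.indicator hs.compl) hp).trans
    (add_le_add_left (eLpNorm_indicator_le _) _)

theorem eLpNorm_le_ofReal_of_integral_rpow_le {f : α → E} {r ε : ℝ} (hr : 0 < r) (hε : 0 ≤ ε)
    (hf : MemLp f (ENNReal.ofReal r) μ) (h : ∫ x, ‖f x‖ ^ r ∂μ ≤ ε ^ r) :
    eLpNorm f (ENNReal.ofReal r) μ ≤ ENNReal.ofReal ε := by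
  rw [hf.eLpNorm_eq_integral_rpow_norm (by simpa using hr) ENNReal.ofReal_ne_top,
    ENNReal.toReal_ofReal hr.le]
  exact ENNReal.ofReal_le_ofReal
    ((Real.rpow_inv_le_iff_of_pos (integral_nonneg fun x => by positivity) hε hr).2 h)

end LpSeminorm

section FiberwiseConstant

variable {𝕜 α ι E : Type*} [NormedField 𝕜] [NormedAddCommGroup E] [NormedSpace 𝕜 E]
  [MeasurableSpace α] [MeasurableSpace ι] [MeasurableSingletonClass ι] {μ : Measure α}

/-- The map sending a vector to the corresponding constant function on a set of finite measure,
extended by zero, as a linear map into `L^p`. -/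
noncomputable def indicatorConstLpₗ (p : ℝ≥0∞) {s : Set α} (hs : MeasurableSet s)
    (hμs : μ s ≠ ∞) : E →ₗ[𝕜] Lp E p μ where
  toFun := indicatorConstLp p hs hμs
  map_add' _ _ := indicatorConstLp_add.symm
  map_smul' r c := by
    ext1
    filter_upwards [indicatorConstLp_coeFn (p := p) (hs := hs) (hμs := hμs) (c := r • c),
      Lp.coeFn_smul r (indicatorConstLp p hs hμs c),
      indicatorConstLp_coeFn (p := p) (hs := hs) (hμs := hμs) (c := c)] with x h₁ h₂ h₃
    rw [h₁, RingHom.id_apply, h₂, Pi.smul_apply, h₃, indicator_const_smul_apply]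

theorem exists_finiteDimensional_forall_indicator_comp [FiniteDimensional 𝕜 E] (p : ℝ≥0∞)
    {π : α → ι} (hπ : Measurable π) (s : Finset ι) (hμ : ∀ k, μ (π ⁻¹' {k}) ≠ ∞) :
    ∃ V : Submodule 𝕜 (Lp E p μ), FiniteDimensional 𝕜 V ∧
      ∀ c : ι → E, ∃ g ∈ V, g =ᵐ[μ] (π ⁻¹' s).indicator (c ∘ π) := by
  classical
  let T (k : ι) : E →ₗ[𝕜] Lp E p μ :=
    indicatorConstLpₗ p (hπ (measurableSet_singleton k)) (hμ k)
  refine ⟨⨆ k : s, (T k).range, inferInstance, fun c => ⟨∑ k : s, T k (c k),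
    Submodule.sum_mem _ fun k _ => Submodule.mem_iSup_of_mem k ⟨c k, rfl⟩, ?_⟩⟩
  have hT : ∀ᵐ x ∂μ, ∀ k : s, T k (c k) x = (π ⁻¹' {(k : ι)}).indicator (fun _ => c k) x :=
    ae_all_iff.2 fun k => indicatorConstLp_coeFn (hs := hπ (measurableSet_singleton (k : ι)))
      (hμs := hμ k)
  filter_upwards [Lp.coeFn_finsetSum Finset.univ fun k : s => T k (c k), hT] with x hsum hx
  rw [hsum, Finset.sum_apply, Finset.sum_congr rfl fun k _ => hx k,
    Finset.sum_coe_sort s fun k => (π ⁻¹' {k}).indicator (fun _ => c k) x]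
  simp [indicator_apply]

end FiberwiseConstant

section GridSampling

theorem exists_lintegral_sub_le_two_mul {α : Type*} [MeasurableSpace α] {μ : Measure α}
    [SFinite μ] {K : α → ℝ → ℝ≥0∞} (hK : Measurable (Function.uncurry K)) {a : α → ℝ}
    (ha : Measurable a) {h : ℝ} (hh : 0 < h) (hah : ∀ x, a x ∈ Icc 0 h) {A : ℝ≥0∞}
    (hA : ∀ y ∈ Ioo 0 (2 * h), ∫⁻ x, K x y ∂μ ≤ A) :
    ∃ t, ∫⁻ x, K x (t - a x) ∂μ ≤ 2 * A := by
  have hvol : volume (Ioo h (2 * h)) = ENNReal.ofReal h := by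
    rw [Real.volume_Ioo, two_mul, add_sub_cancel_right]
  have hmeas : Measurable fun z : ℝ × α => K z.2 (z.1 - a z.2) :=
    hK.comp (measurable_snd.prodMk (measurable_fst.sub (ha.comp measurable_snd)))
  have hshift (x : α) :
      ∫⁻ t in Ioo h (2 * h), K x (t - a x) ≤ ∫⁻ y in Ioo 0 (2 * h), K x y := by
    rw [← (measurePreserving_sub_right volume (a x)).setLIntegral_comp_preimage_emb
      (measurableEmbedding_subRight (a x)) (K x)]
    refine lintegral_mono_set fun t ht => ?_
    exact ⟨by linarith [ht.1, (hah x).2], by linarith [ht.2, (hah x).1]⟩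
  have hdouble : ∫⁻ t in Ioo h (2 * h), ∫⁻ x, K x (t - a x) ∂μ ≤ 2 * A * ENNReal.ofReal h := by
    calc ∫⁻ t in Ioo h (2 * h), ∫⁻ x, K x (t - a x) ∂μ
        = ∫⁻ x, (∫⁻ t in Ioo h (2 * h), K x (t - a x)) ∂μ :=
          lintegral_lintegral_swap hmeas.aemeasurable
      _ ≤ ∫⁻ x, (∫⁻ y in Ioo 0 (2 * h), K x y) ∂μ := lintegral_mono hshift
      _ = ∫⁻ y in Ioo 0 (2 * h), ∫⁻ x, K x y ∂μ := lintegral_lintegral_swap hK.aemeasurable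
      _ ≤ ∫⁻ _ in Ioo 0 (2 * h), A := setLIntegral_mono measurable_const hA
      _ = 2 * A * ENNReal.ofReal h := by
          rw [setLIntegral_const, Real.volume_Ioo, sub_zero, ENNReal.ofReal_mul zero_le_two,
            ENNReal.ofReal_ofNat]
          ring
  have hh₀ : ENNReal.ofReal h ≠ 0 := by simpa using hh
  obtain ⟨t, -, ht⟩ := exists_le_setLAverage (μ := volume) (s := Ioo h (2 * h))
    (by rwa [hvol]) (by simp [hvol]) (hmeas.lintegral_prod_right' (ν := μ)).aemeasurable
  refine ⟨t, ht.trans ?_⟩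
  rw [setLAverage_eq, hvol]
  exact ENNReal.div_le_of_le_mul hdouble

variable {E : Type*} [NormedAddCommGroup E] {μ : Measure ℝ} {p : ℝ≥0∞} {f : ℝ → E} {h : ℝ}

theorem exists_eLpNorm_sub_gridSample_le [SFinite μ] (hf : StronglyMeasurable f) (hp₀ : p ≠ 0)
    (hp : p ≠ ∞) (hh : 0 < h) {A : ℝ≥0∞}
    (hA : ∀ y ∈ Ioo 0 (2 * h), eLpNorm (fun x => f (x + y) - f x) p μ ≤ A) :
    ∃ t, eLpNorm (fun x => f x - f (h * ⌊x / h⌋ + t)) p μ ≤ 2 ^ p.toReal⁻¹ * A := by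
  have hp' : 0 < p.toReal := ENNReal.toReal_pos hp₀ hp
  simp only [eLpNorm_eq_lintegral_rpow_enorm_toReal hp₀ hp, one_div,
    ENNReal.rpow_inv_le_iff hp'] at hA
  have hK : Measurable (Function.uncurry fun x y => ‖f (x + y) - f x‖ₑ ^ p.toReal) :=
    ((hf.comp_measurable measurable_add).sub
      (hf.comp_measurable measurable_fst)).enorm.pow_const _
  obtain ⟨t, ht⟩ := exists_lintegral_sub_le_two_mul (a := fun x => h * Int.fract (x / h)) hK
    (by fun_prop) hh (fun x => ⟨by positivity,
      mul_le_of_le_one_right hh.le (Int.fract_lt_one _).le⟩) hA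
  have hsample (x : ℝ) : x + (t - h * Int.fract (x / h)) = h * ⌊x / h⌋ + t := by
    rw [Int.fract, mul_sub, mul_div_cancel₀ x hh.ne']
    ring
  refine ⟨t, ?_⟩
  rw [eLpNorm_eq_lintegral_rpow_enorm_toReal hp₀ hp, one_div, ENNReal.rpow_inv_le_iff hp',
    ENNReal.mul_rpow_of_nonneg _ _ hp'.le, ← ENNReal.rpow_mul, inv_mul_cancel₀ hp'.ne',
    ENNReal.rpow_one]
  simpa only [hsample, enorm_sub_rev] using ht

theorem exists_eLpNorm_sub_indicator_gridStep_le [SFinite μ] (hf : StronglyMeasurable f)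
    (hp₁ : 1 ≤ p) (hp : p ≠ ∞) (hh : 0 < h) {s : Set ℤ} {A B : ℝ≥0∞}
    (hA : ∀ y ∈ Ioo 0 (2 * h), eLpNorm (fun x => f (x + y) - f x) p μ ≤ A)
    (hB : eLpNorm f p (μ.restrict ((fun x => ⌊x / h⌋) ⁻¹' s)ᶜ) ≤ B) :
    ∃ c : ℤ → E,
      eLpNorm (f - ((fun x => ⌊x / h⌋) ⁻¹' s).indicator (c ∘ fun x => ⌊x / h⌋)) p μ ≤
        2 * A + B := by
  have hp₀ : p ≠ 0 := (one_pos.trans_le hp₁).ne'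
  have hfloor : Measurable fun x : ℝ => ⌊x / h⌋ := by fun_prop
  obtain ⟨t, ht⟩ := exists_eLpNorm_sub_gridSample_le hf hp₀ hp hh hA
  have htwo : (2 : ℝ≥0∞) ^ p.toReal⁻¹ ≤ 2 :=
    (ENNReal.rpow_le_rpow_of_exponent_le one_le_two
      (inv_le_one_of_one_le₀ (ENNReal.toReal_mono hp hp₁))).trans_eq
      (ENNReal.rpow_one 2)
  refine ⟨fun k => f (h * k + t), (eLpNorm_sub_indicator_le hf.aestronglyMeasurable
    (hf.comp_measurable (by fun_prop)).aestronglyMeasurable hp₁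
    (hfloor (.of_discrete))).trans (add_le_add (ht.trans ?_) hB)⟩
  gcongr

theorem measure_floor_div_fiber_ne_top [IsLocallyFiniteMeasure μ] (hh : 0 < h) (k : ℤ) :
    μ ((fun x => ⌊x / h⌋) ⁻¹' {k}) ≠ ∞ := by
  have hsubset : (fun x => ⌊x / h⌋) ⁻¹' {k} ⊆ Icc (k * h) ((k + 1) * h) := fun x hx =>
    have hfloor := Int.floor_eq_iff.1 (show ⌊x / h⌋ = k from hx)
    ⟨(le_div_iff₀ hh).1 hfloor.1, ((div_lt_iff₀ hh).1 hfloor.2).le⟩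
  exact measure_ne_top_of_subset hsubset measure_Icc_lt_top.ne

theorem Icc_neg_subset_preimage_floor_div (hh : 0 < h) {M : ℝ} {N : ℤ} (hN : M / h < N) :
    Icc (-M) M ⊆ (fun x => ⌊x / h⌋) ⁻¹' Ico (-N) N := by
  intro x hx
  have hlower : -(M / h) ≤ x / h := by
    rw [← neg_div]
    exact div_le_div_of_nonneg_right hx.1 hh.le
  have hupper : x / h ≤ M / h := div_le_div_of_nonneg_right hx.2 hh.le
  refine ⟨Int.le_floor.2 ?_, Int.floor_lt.2 (hupper.trans_lt hN)⟩
  push_cast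
  linarith

end GridSampling

/-- Measures on the line that do not increase when they are pushed to the right: those for which
`f ↦ f (· + y)` with `0 ≤ y` is well defined on `L^p` classes and does not increase the norm. -/
def IsTranslationSubinvariant (μ : Measure ℝ) : Prop :=
  ∀ ⦃y : ℝ⦄, 0 ≤ y → μ.map (· + y) ≤ μ

section TranslationSubinvariant

variable {E : Type*} [NormedAddCommGroup E] {μ : Measure ℝ} {p : ℝ≥0∞} {f : ℝ → E} {y : ℝ}

theorem isTranslationSubinvariant_withDensity {w : ℝ → ℝ≥0∞} (hw : Monotone w) :
    IsTranslationSubinvariant (volume.withDensity w) := by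
  intro y hy
  refine Measure.le_iff.2 fun s hs => ?_
  rw [Measure.map_apply (measurable_add_const y) hs, withDensity_apply _ hs,
    withDensity_apply _ (measurable_add_const y hs)]
  calc ∫⁻ x in (· + y) ⁻¹' s, w x
      ≤ ∫⁻ x in (· + y) ⁻¹' s, w (x + y) :=
        lintegral_mono fun x => hw (le_add_of_nonneg_right hy)
    _ = ∫⁻ x in s, w x :=
        (measurePreserving_add_right volume y).setLIntegral_comp_preimage_emb
          (measurableEmbedding_addRight y) w s

namespace IsTranslationSubinvariant

theorem aestronglyMeasurable_comp_add (hμ : IsTranslationSubinvariant μ)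
    (hf : AEStronglyMeasurable f μ) (hy : 0 ≤ y) :
    AEStronglyMeasurable (fun x => f (x + y)) μ :=
  (hf.mono_measure (hμ hy)).comp_measurable (measurable_add_const y)

theorem memLp_comp_add (hμ : IsTranslationSubinvariant μ) (hf : MemLp f p μ) (hy : 0 ≤ y) :
    MemLp (fun x => f (x + y)) p μ :=
  (hf.mono_measure (hμ hy)).comp_of_map (measurable_add_const y).aemeasurable

theorem eLpNorm_comp_add_le (hμ : IsTranslationSubinvariant μ) (hf : AEStronglyMeasurable f μ)
    (hy : 0 ≤ y) : eLpNorm (fun x => f (x + y)) p μ ≤ eLpNorm f p μ :=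
  eLpNorm_comp_le_of_map_le hf (measurable_add_const y).aemeasurable (hμ hy)

theorem eLpNorm_comp_add_restrict_le (hμ : IsTranslationSubinvariant μ)
    (hf : AEStronglyMeasurable f μ) (hy : 0 ≤ y) {s t : Set ℝ} (ht : MeasurableSet t)
    (hst : MapsTo (· + y) s t) :
    eLpNorm (fun x => f (x + y)) p (μ.restrict s) ≤ eLpNorm f p (μ.restrict t) := by
  refine eLpNorm_comp_le_of_map_le hf.restrict (measurable_add_const y).aemeasurable ?_
  calc (μ.restrict s).map (· + y)
      ≤ (μ.restrict ((· + y) ⁻¹' t)).map (· + y) :=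
        Measure.map_mono (Measure.restrict_mono hst le_rfl) (measurable_add_const y)
    _ = (μ.map (· + y)).restrict t := (Measure.restrict_map (measurable_add_const y) ht).symm
    _ ≤ μ.restrict t := Measure.restrict_mono subset_rfl (hμ hy)

theorem eLpNorm_comp_add_nsmul_sub_le (hμ : IsTranslationSubinvariant μ)
    (hf : AEStronglyMeasurable f μ) (hp : 1 ≤ p) (hy : 0 ≤ y) (n : ℕ) :
    eLpNorm (fun x => f (x + n * y) - f x) p μ ≤
      n * eLpNorm (fun x => f (x + y) - f x) p μ := by
  induction n with
  | zero => simp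
  | succ n ih =>
    have hny : 0 ≤ n * y := by positivity
    have hdiff : AEStronglyMeasurable (fun x => f (x + y) - f x) μ :=
      (hμ.aestronglyMeasurable_comp_add hf hy).sub hf
    have hlast := hμ.eLpNorm_comp_add_le (p := p) hdiff hny
    calc eLpNorm (fun x => f (x + (n + 1 : ℕ) * y) - f x) p μ
        = eLpNorm ((fun x => f (x + n * y + y) - f (x + n * y)) +
            fun x => f (x + n * y) - f x) p μ := by
          congr 1 with x
          rw [Pi.add_apply, sub_add_sub_cancel, Nat.cast_succ, add_one_mul, add_assoc]
      _ ≤ eLpNorm (fun x => f (x + n * y + y) - f (x + n * y)) p μ +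
            eLpNorm (fun x => f (x + n * y) - f x) p μ :=
          eLpNorm_add_le (hμ.aestronglyMeasurable_comp_add hdiff hny)
            ((hμ.aestronglyMeasurable_comp_add hf hny).sub hf) hp
      _ ≤ eLpNorm (fun x => f (x + y) - f x) p μ +
            n * eLpNorm (fun x => f (x + y) - f x) p μ :=
          add_le_add hlast ih
      _ = (n + 1 : ℕ) * eLpNorm (fun x => f (x + y) - f x) p μ := by
          push_cast
          ring

theorem eLpNorm_le_two_mul_restrict_compl_add (hμ : IsTranslationSubinvariant μ)
    (hf : AEStronglyMeasurable f μ) (hp : 1 ≤ p) (hy : 0 ≤ y) {s : Set ℝ} (hs : MeasurableSet s)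
    {n : ℕ} (hn : MapsTo (· + n * y) s sᶜ) :
    eLpNorm f p μ ≤ 2 * eLpNorm f p (μ.restrict sᶜ) +
      n * eLpNorm (fun x => f (x + y) - f x) p μ := by
  have hny : 0 ≤ n * y := by positivity
  have hshift := hμ.aestronglyMeasurable_comp_add hf hny
  have hinside : eLpNorm f p (μ.restrict s) ≤
      eLpNorm f p (μ.restrict sᶜ) + n * eLpNorm (fun x => f (x + y) - f x) p μ := by
    calc eLpNorm f p (μ.restrict s)
        = eLpNorm ((fun x => f (x + n * y)) - fun x => f (x + n * y) - f x) p
            (μ.restrict s) := by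
          congr 1 with x
          exact (sub_sub_cancel _ _).symm
      _ ≤ eLpNorm (fun x => f (x + n * y)) p (μ.restrict s) +
            eLpNorm (fun x => f (x + n * y) - f x) p (μ.restrict s) :=
          eLpNorm_sub_le hshift.restrict (hshift.sub hf).restrict hp
      _ ≤ _ := add_le_add (hμ.eLpNorm_comp_add_restrict_le hf hny hs.compl hn)
          ((eLpNorm_restrict_le _ _ _ _).trans (hμ.eLpNorm_comp_add_nsmul_sub_le hf hp hy n))
  calc eLpNorm f p μ ≤ eLpNorm f p (μ.restrict s) + eLpNorm f p (μ.restrict sᶜ) :=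
        eLpNorm_le_eLpNorm_restrict_add_compl hf hp hs
    _ ≤ _ := by
        rw [two_mul, add_right_comm]
        exact add_le_add_left hinside _

end IsTranslationSubinvariant

end TranslationSubinvariant

section FrechetKolmogorov

variable {E : Type*} [NormedAddCommGroup E] {μ : Measure ℝ} {p : ℝ≥0∞} [Fact (1 ≤ p)]
  {F : Set (Lp E p μ)}

theorem isBounded_Lp_of_eLpNorm_translate_sub_le (hμ : IsTranslationSubinvariant μ)
    {M ρ A B : ℝ} (hρ : 0 < ρ)
    (htail : ∀ f ∈ F, eLpNorm f p (μ.restrict (Icc (-M) M)ᶜ) ≤ ENNReal.ofReal B)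
    (hequi : ∀ f ∈ F, eLpNorm (fun x => f (x + ρ) - f x) p μ ≤ ENNReal.ofReal A) :
    Bornology.IsBounded F := by
  obtain ⟨n, hn⟩ := exists_nat_gt (2 * M / ρ)
  rw [div_lt_iff₀ hρ] at hn
  have hmaps : MapsTo (· + n * ρ) (Icc (-M) M) (Icc (-M) M)ᶜ := fun x hx hx' => by
    linarith [hx.1, hx'.2]
  refine isBounded_iff_forall_norm_le.2
    ⟨(2 * ENNReal.ofReal B + n * ENNReal.ofReal A).toReal, fun f hf => ?_⟩
  rw [Lp.norm_def]
  refine ENNReal.toReal_mono (by finiteness) ?_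
  calc eLpNorm f p μ
      ≤ 2 * eLpNorm f p (μ.restrict (Icc (-M) M)ᶜ) +
          n * eLpNorm (fun x => f (x + ρ) - f x) p μ :=
        hμ.eLpNorm_le_two_mul_restrict_compl_add (Lp.aestronglyMeasurable f) Fact.out hρ.le
          measurableSet_Icc hmaps
    _ ≤ 2 * ENNReal.ofReal B + n * ENNReal.ofReal A := by
        gcongr
        exacts [htail f hf, hequi f hf]

variable [NormedSpace ℝ E] [FiniteDimensional ℝ E] [IsLocallyFiniteMeasure μ]

theorem exists_finiteDimensional_dist_le_of_eLpNorm_translate_sub_le (hp : p ≠ ∞)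
    {M ρ ε : ℝ} (hρ : 0 < ρ) (hε : 0 ≤ ε)
    (htail : ∀ f ∈ F, eLpNorm f p (μ.restrict (Icc (-M) M)ᶜ) ≤ ENNReal.ofReal ε)
    (hequi : ∀ f ∈ F, ∀ y ∈ Ioo 0 ρ,
      eLpNorm (fun x => f (x + y) - f x) p μ ≤ ENNReal.ofReal ε) :
    ∃ V : Submodule ℝ (Lp E p μ), FiniteDimensional ℝ V ∧
      ∀ f ∈ F, ∃ g ∈ V, dist f g ≤ 3 * ε := by
  have hh : 0 < ρ / 2 := half_pos hρ
  obtain ⟨N, hN⟩ := exists_int_gt (M / (ρ / 2))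
  obtain ⟨V, hV, hstep⟩ := exists_finiteDimensional_forall_indicator_comp (𝕜 := ℝ) (E := E)
    (μ := μ) p (π := fun x => ⌊x / (ρ / 2)⌋) (by fun_prop) (Finset.Ico (-N) N)
    (measure_floor_div_fiber_ne_top hh)
  rw [Finset.coe_Ico] at hstep
  refine ⟨V, hV, fun f hf => ?_⟩
  have htail' := (eLpNorm_mono_measure f (Measure.restrict_mono (compl_subset_compl.2
    (Icc_neg_subset_preimage_floor_div hh hN)) le_rfl)).trans (htail f hf)
  obtain ⟨c, hc⟩ := exists_eLpNorm_sub_indicator_gridStep_le (Lp.stronglyMeasurable f)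
    Fact.out hp hh (by rw [mul_div_cancel₀ ρ two_ne_zero]; exact hequi f hf) htail'
  obtain ⟨g, hgV, hg⟩ := hstep c
  refine ⟨g, hgV, ?_⟩
  rw [Lp.dist_def, eLpNorm_congr_ae (Filter.EventuallyEq.rfl.sub hg)]
  refine ENNReal.toReal_le_of_le_ofReal (by positivity) (hc.trans_eq ?_)
  rw [ENNReal.ofReal_mul zero_le_three, ENNReal.ofReal_ofNat]
  ring

theorem totallyBounded_Lp_of_eLpNorm_translate_sub_le (hμ : IsTranslationSubinvariant μ)
    (hp : p ≠ ∞)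
    (htail : ∀ ε > (0 : ℝ), ∃ M : ℝ, ∀ f ∈ F,
      eLpNorm f p (μ.restrict (Icc (-M) M)ᶜ) ≤ ENNReal.ofReal ε)
    (hequi : ∀ ε > (0 : ℝ), ∃ ρ > (0 : ℝ), ∀ f ∈ F, ∀ y ∈ Ioo 0 ρ,
      eLpNorm (fun x => f (x + y) - f x) p μ ≤ ENNReal.ofReal ε) :
    TotallyBounded F := by
  refine totallyBounded_of_forall_exists_finiteDimensional (𝕜 := ℝ) ?_ fun ε hε => ?_
  · obtain ⟨M, hM⟩ := htail 1 one_pos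
    obtain ⟨ρ, hρ, hclose⟩ := hequi 1 one_pos
    exact isBounded_Lp_of_eLpNorm_translate_sub_le hμ (half_pos hρ) hM
      fun f hf => hclose f hf _ ⟨half_pos hρ, half_lt_self hρ⟩
  · have hε₃ : 0 < ε / 3 := by positivity
    obtain ⟨M, hM⟩ := htail (ε / 3) hε₃
    obtain ⟨ρ, hρ, hclose⟩ := hequi (ε / 3) hε₃
    simpa only [mul_div_cancel₀ ε three_ne_zero] using
      exists_finiteDimensional_dist_le_of_eLpNorm_translate_sub_le hp hρ hε₃.le hM hclose

end FrechetKolmogorov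

section BesselMeasure

variable {lam : ℝ}

theorem ae_besselMeasure_pos (lam : ℝ) : ∀ᵐ x ∂besselMeasure lam, 0 < x :=
  (withDensity_absolutelyContinuous _ _).ae_le (ae_restrict_mem measurableSet_Ioi)

theorem isLocallyFiniteMeasure_besselMeasure (hlam : 0 ≤ lam) :
    IsLocallyFiniteMeasure (besselMeasure lam) :=
  IsLocallyFiniteMeasure.withDensity_ofReal (Real.continuous_rpow_const (by positivity))

theorem isTranslationSubinvariant_besselMeasure (hlam : 0 ≤ lam) :
    IsTranslationSubinvariant (besselMeasure lam) := by
  have hmono : Monotone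
      ((Ioi (0 : ℝ)).indicator fun x => ENNReal.ofReal (x ^ (2 * lam))) := by
    intro a b hab
    refine indicator_apply_le' (fun ha => ?_) fun _ => zero_le
    rw [indicator_of_mem (mem_Ioi.2 (lt_of_lt_of_le ha hab))]
    exact ENNReal.ofReal_le_ofReal (Real.rpow_le_rpow (le_of_lt ha) hab (by positivity))
  rw [besselMeasure, ← withDensity_indicator measurableSet_Ioi]
  exact isTranslationSubinvariant_withDensity hmono

theorem besselMeasure_restrict_compl_Icc_le (lam M : ℝ) :
    (besselMeasure lam).restrict (Icc (-M) M)ᶜ ≤ (besselMeasure lam).restrict (Ioi M) := by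
  refine Measure.restrict_mono_ae ?_
  filter_upwards [ae_besselMeasure_pos lam] with x hx hxM
  by_contra hle
  exact hxM ⟨by linarith [not_lt.1 hle], not_lt.1 hle⟩

end BesselMeasure

theorem totallyBounded_sufficient_general (lam p : ℝ) (hlam : 0 ≤ lam)
    [Fact ((1 : ℝ≥0∞) ≤ ENNReal.ofReal p)]
    (F : Set (Lp ℝ (ENNReal.ofReal p) (besselMeasure lam)))
    (hvanish : ∀ ε > (0 : ℝ), ∃ M > (0 : ℝ), ∀ f ∈ F,
      (∫ x in Ioi M, |(f : ℝ → ℝ) x| ^ p ∂(besselMeasure lam)) < ε ^ p)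
    (hequi : ∀ ε > (0 : ℝ), ∃ ρ > (0 : ℝ), ∀ f ∈ F, ∀ y : ℝ, 0 < y → y < ρ →
      (∫ x, |(f : ℝ → ℝ) (x + y) - (f : ℝ → ℝ) x| ^ p ∂(besselMeasure lam)) < ε ^ p) :
    TotallyBounded F := by
  have hp : 0 < p := one_pos.trans_le (ENNReal.one_le_ofReal.1 Fact.out)
  have hμ := isTranslationSubinvariant_besselMeasure hlam
  have := isLocallyFiniteMeasure_besselMeasure hlam
  refine totallyBounded_Lp_of_eLpNorm_translate_sub_le hμ ENNReal.ofReal_ne_top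
    (fun ε hε => ?_) fun ε hε => ?_
  · obtain ⟨M, -, htail⟩ := hvanish ε hε
    exact ⟨M, fun f hf =>
      (eLpNorm_mono_measure f (besselMeasure_restrict_compl_Icc_le lam M)).trans
        (eLpNorm_le_ofReal_of_integral_rpow_le hp hε.le ((Lp.memLp f).restrict _)
          (htail f hf).le)⟩
  · obtain ⟨ρ, hρ, hclose⟩ := hequi ε hε
    exact ⟨ρ, hρ, fun f hf y hy => eLpNorm_le_ofReal_of_integral_rpow_le hp hε.le
      ((hμ.memLp_comp_add (Lp.memLp f) hy.1.le).sub (Lp.memLp f))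
      (hclose f hf y hy.1 hy.2).le⟩

theorem totallyBounded_sufficient (lam p : ℝ) (hlam : 0 < lam) (hp : 1 < p)
    [Fact ((1 : ENNReal) ≤ ENNReal.ofReal p)]
    (F : Set (Lp ℝ (ENNReal.ofReal p) (besselMeasure lam)))
    (hbdd : ∃ C : ℝ, ∀ f ∈ F, ‖f‖ ≤ C)
    (hvanish : ∀ ε > (0:ℝ), ∃ M > (0:ℝ), ∀ f ∈ F,
      (∫ x in Set.Ioi M, |(f : ℝ → ℝ) x| ^ p ∂(besselMeasure lam)) < ε ^ p)
    (hequi : ∀ ε > (0:ℝ), ∃ ρ > (0:ℝ), ∀ f ∈ F, ∀ y : ℝ, 0 < y → y < ρ →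
      (∫ x, |(f : ℝ → ℝ) (x + y) - (f : ℝ → ℝ) x| ^ p ∂(besselMeasure lam)) < ε ^ p) :
    TotallyBounded F :=
  totallyBounded_sufficient_general lam p hlam.le F hvanish hequi
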